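/- Suppose g(r) = o(r^{-c}) as r → ∞ for some c > 2d, and fix γ > 0. Let L_n(γ) be the length (in the toroidal metric) of the longest edge of the graph G_n(r̂_n(γ)) (with L_n(γ) := 0 if there are no edges). Then almost surely, limsup_{n→∞} (log L_n(γ))/(log n) ≤ −(c − 2d)/(d(c − d)). -/

import Mathlib

open MeasureTheory ProbabilityTheory Filter Set

noncomputable section

namespace RCM

/-- The toroidal metric on the unit cube. -/
def torusDist {d : ℕ} (x y : EuclideanSpace ℝ (Fin d)) : ℝ :=
  ⨅ z : Fin d → ℤ, ‖x - y - (WithLp.equiv 2 (Fin d → ℝ)).symm (fun i => (z i : ℝ))‖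

/-- The half-open unit cube `S = (-1/2, 1/2]^d`. -/
def cube (d : ℕ) : Set (EuclideanSpace ℝ (Fin d)) :=
  {x | ∀ i, x i ∈ Set.Ioc (-(1/2) : ℝ) (1/2)}

/-- The random connection model: i.i.d. uniform points `X`, coupled Poisson counts `N`,
i.i.d. uniform edge variables `U`, with the three families mutually independent, and a
non-increasing connection function `g : [0,∞) → [0,1]` with finite positive integral `α`. -/
structure Model (d : ℕ) {Ω : Type*} [MeasurableSpace Ω] (P : Measure Ω) where
  g : ℝ → ℝ
  α : ℝ
  X : ℕ → Ω → EuclideanSpace ℝ (Fin d)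
  N : ℕ → Ω → ℕ
  U : ℕ → ℕ → Ω → ℝ
  g_antitone : AntitoneOn g (Set.Ici 0)
  g_mem : ∀ r : ℝ, 0 ≤ r → g r ∈ Set.Icc (0 : ℝ) 1
  g_integrable : MeasureTheory.Integrable (fun x : EuclideanSpace ℝ (Fin d) => g ‖x‖)
  α_def : α = ∫ x : EuclideanSpace ℝ (Fin d), g ‖x‖
  α_pos : 0 < α
  X_meas : ∀ i, Measurable (X i)
  X_unif : ∀ i : ℕ, 1 ≤ i → Measure.map (X i) P = volume.restrict (cube d)
  X_indep : iIndepFun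
    (fun i : {i : ℕ // 1 ≤ i} => X i) P
  N_meas : ∀ n, Measurable (N n)
  N_mono : ∀ ω, Monotone fun n => N n ω
  N_poisson : ∀ n k : ℕ,
    P {ω | N n ω = k} = ENNReal.ofReal (Real.exp (-(n : ℝ)) * (n : ℝ) ^ k / k.factorial)
  U_meas : ∀ i j, Measurable (U i j)
  U_unif : ∀ i j : ℕ, 1 ≤ i → i < j →
    Measure.map (U i j) P = volume.restrict (Set.Icc (0 : ℝ) 1)
  U_indep : iIndepFun
    (fun p : {p : ℕ × ℕ // 1 ≤ p.1 ∧ p.1 < p.2} => U p.1.1 p.1.2) P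
  families_indep : iIndep
    (![MeasurableSpace.comap (fun ω => fun i : ℕ => X i ω) inferInstance,
       MeasurableSpace.comap (fun ω => fun n : ℕ => N n ω) inferInstance,
       MeasurableSpace.comap (fun ω => fun p : ℕ × ℕ => U p.1 p.2 ω) inferInstance]) P

variable {d : ℕ} {Ω : Type*} [MeasurableSpace Ω] {P : Measure Ω}

/-- Adjacency in the graph `G_n(r)`: vertices `1 ≤ i,j ≤ N_n` are joined iff
`U_{ij} ≤ g(dist(X_i,X_j)/r)`. -/
def adj (M : Model d P) (n : ℕ) (r : ℝ) (ω : Ω) (i j : ℕ) : Prop :=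
  i ≠ j ∧ 1 ≤ i ∧ 1 ≤ j ∧ i ≤ M.N n ω ∧ j ≤ M.N n ω ∧
    M.U (min i j) (max i j) ω ≤ M.g (torusDist (M.X i ω) (M.X j ω) / r)

/-- The degree of vertex `i` in `G_n(r)`. -/
def deg (M : Model d P) (n : ℕ) (r : ℝ) (ω : Ω) (i : ℕ) : ℕ :=
  {j : ℕ | adj M n r ω i j}.ncard

/-- `W_n(r)`, the number of isolated vertices of `G_n(r)`. -/
def isolatedCount (M : Model d P) (n : ℕ) (r : ℝ) (ω : Ω) : ℕ :=
  {i : ℕ | 1 ≤ i ∧ i ≤ M.N n ω ∧ deg M n r ω i = 0}.ncard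

/-- `r̂_n(γ)` defined by `r̂_n(γ)^d = γ log n / (α n)`. -/
def rhat (M : Model d P) (γ : ℝ) (n : ℕ) : ℝ :=
  (γ * Real.log n / (M.α * n)) ^ ((1 : ℝ) / d)

/-- `d_n`, the critical parameter for absence of isolated nodes. -/
def critRadius (M : Model d P) (n : ℕ) (ω : Ω) : ℝ :=
  sInf {r : ℝ | 0 < r ∧ isolatedCount M n r ω = 0}

/-- The maximum vertex degree `Δ_n` of `G_n(r)`. -/
def maxDeg (M : Model d P) (n : ℕ) (r : ℝ) (ω : Ω) : ℕ :=
  (Finset.Icc 1 (M.N n ω)).sup (deg M n r ω)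

/-- The minimum vertex degree `δ_n` of `G_n(r)`. -/
def minDeg (M : Model d P) (n : ℕ) (r : ℝ) (ω : Ω) : ℕ :=
  sInf {k : ℕ | ∃ i, 1 ≤ i ∧ i ≤ M.N n ω ∧ deg M n r ω i = k}

/-- The length (toroidal metric) of the longest edge of `G_n(r)` (`0` if there are no edges). -/
def longestEdge (M : Model d P) (n : ℕ) (r : ℝ) (ω : Ω) : ℝ :=
  sSup ({0} ∪ {t : ℝ | ∃ i j, adj M n r ω i j ∧ t = torusDist (M.X i ω) (M.X j ω)})

/-- Connectivity of `G_n(r)`: any two vertices are joined by a path. -/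
def connectedGraph (M : Model d P) (n : ℕ) (r : ℝ) (ω : Ω) : Prop :=
  ∀ i j : ℕ, 1 ≤ i → i ≤ M.N n ω → 1 ≤ j → j ≤ M.N n ω →
    Relation.ReflTransGen (adj M n r ω) i j

/-- `H(x) = 1 - x + x log x` (with `H(0) = 1`, since `log 0 = 0` in Lean). -/
def H (x : ℝ) : ℝ := 1 - x + x * Real.log x

/-- The inverse of the restriction of `H` to `[1, ∞)`. -/
def Hplusinv (y : ℝ) : ℝ := sInf {x : ℝ | 1 ≤ x ∧ y ≤ H x}

/-- The inverse of the restriction of `H` to `[0, 1]`. -/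
def Hminusinv (y : ℝ) : ℝ := sInf {x : ℝ | 0 ≤ x ∧ H x ≤ y}

/-- The standard normal distribution function. -/
def stdNormalCDF (x : ℝ) : ℝ :=
  ∫ t in Set.Iic x, Real.exp (-t ^ 2 / 2) / Real.sqrt (2 * Real.pi)

lemma measurableSet_box (u v : Fin d → ℝ) :
    MeasurableSet {x : EuclideanSpace ℝ (Fin d) | ∀ i, x i ∈ Set.Icc (u i) (v i)} := by
  rw [ofPred_forall]
  exact MeasurableSet.iInter fun i => measurableSet_Icc.preimage (by fun_prop)

lemma volume_box (u v : Fin d → ℝ) :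
    volume {x : EuclideanSpace ℝ (Fin d) | ∀ i, x i ∈ Set.Icc (u i) (v i)}
      = ∏ i, ENNReal.ofReal (v i - u i) := by
  rw [← Real.volume_Icc_pi,
    ← (PiLp.volume_preserving_ofLp (Fin d)).measure_preimage measurableSet_Icc.nullMeasurableSet]
  congr 1
  ext x
  simp [Pi.le_def, forall_and]

lemma torusDist_nonneg (x y : EuclideanSpace ℝ (Fin d)) : 0 ≤ torusDist x y :=
  Real.iInf_nonneg fun _ => norm_nonneg _

lemma bddBelow_torusDist (x y : EuclideanSpace ℝ (Fin d)) :
    BddBelow (Set.range fun z : Fin d → ℤ =>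
      ‖x - y - (WithLp.equiv 2 (Fin d → ℝ)).symm (fun i => (z i : ℝ))‖) :=
  ⟨0, by rintro _ ⟨z, rfl⟩; exact norm_nonneg _⟩

lemma measurable_torusDist :
    Measurable fun p : EuclideanSpace ℝ (Fin d) × EuclideanSpace ℝ (Fin d) =>
      torusDist p.1 p.2 := by
  unfold torusDist
  exact Measurable.iInf fun z => by fun_prop

/-- A toroidal ball has at most the volume of the Euclidean ball of the same radius. -/
lemma volume_restrict_cube_torusDist_lt (x : EuclideanSpace ℝ (Fin d)) (t : ℝ) :
    volume.restrict (cube d) {y | torusDist x y < t} ≤ volume (Metric.ball x t) := by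
  set e : (Fin d → ℤ) → EuclideanSpace ℝ (Fin d) := fun z =>
    (WithLp.equiv 2 (Fin d → ℝ)).symm (fun i => (z i : ℝ)) with he
  have hcube : MeasurableSet (cube d) := by
    unfold cube
    rw [ofPred_forall]
    exact MeasurableSet.iInter fun i => measurableSet_Ioc.preimage (by fun_prop)
  have hA : ∀ z, MeasurableSet ((fun y => y + -e z) ⁻¹' cube d ∩ Metric.ball x t) := fun z =>
    (hcube.preimage (by fun_prop)).inter measurableSet_ball
  have hsub : {y | torusDist x y < t} ∩ cube d
      ⊆ ⋃ z, (fun y => y + e z) ⁻¹' ((fun y => y + -e z) ⁻¹' cube d ∩ Metric.ball x t) := by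
    rintro y ⟨hy, hyc⟩
    obtain ⟨z, hz⟩ := (ciInf_lt_iff (bddBelow_torusDist x y)).1 hy
    refine mem_iUnion.2 ⟨z, ?_, ?_⟩
    · simpa using hyc
    · rw [Metric.mem_ball, dist_comm, dist_eq_norm, ← sub_sub]
      exact hz
  have hdisj : Pairwise (Function.onFun Disjoint
      fun z => (fun y => y + -e z) ⁻¹' cube d ∩ Metric.ball x t) := by
    intro z z' hzz
    refine Set.disjoint_left.2 fun y hy hy' => hzz ?_
    ext i
    have h1 := hy.1 i
    have h2 := hy'.1 i
    simp only [he, PiLp.add_apply, PiLp.neg_apply, WithLp.equiv_symm_apply, Set.mem_Ioc] at h1 h2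
    have h3 : ((z i : ℤ) : ℝ) < z' i + 1 := by linarith [h1.1, h2.2]
    have h4 : ((z' i : ℤ) : ℝ) < z i + 1 := by linarith [h1.2, h2.1]
    norm_cast at h3 h4
    omega
  calc volume.restrict (cube d) {y | torusDist x y < t}
      = volume ({y | torusDist x y < t} ∩ cube d) := Measure.restrict_apply' hcube
    _ ≤ ∑' z, volume
          ((fun y => y + e z) ⁻¹' ((fun y => y + -e z) ⁻¹' cube d ∩ Metric.ball x t)) :=
        (measure_mono hsub).trans (measure_iUnion_le _)
    _ = ∑' z, volume ((fun y => y + -e z) ⁻¹' cube d ∩ Metric.ball x t) := by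
        simp_rw [measure_preimage_add_right]
    _ = volume (⋃ z, (fun y => y + -e z) ⁻¹' cube d ∩ Metric.ball x t) :=
        (measure_iUnion hdisj hA).symm
    _ ≤ volume (Metric.ball x t) := measure_mono (iUnion_subset fun z => inter_subset_right)

/-- If all coordinate differences lie in `[a, b]` with `b ≤ 1/2`, then the toroidal distance is
at least `a`. -/
lemma le_torusDist (hd : 0 < d) {x y : EuclideanSpace ℝ (Fin d)} {a b : ℝ} (hb : b ≤ 1 / 2)
    (h : ∀ i, y i ∈ Set.Icc (x i + a) (x i + b)) : a ≤ torusDist x y := by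
  refine le_ciInf fun z => ?_
  refine le_trans ?_ (PiLp.norm_apply_le _ (⟨0, hd⟩ : Fin d))
  obtain ⟨h1, h2⟩ := h ⟨0, hd⟩
  simp only [PiLp.sub_apply, WithLp.equiv_symm_apply, Real.norm_eq_abs]
  rcases le_or_gt 0 (z ⟨0, hd⟩) with hz | hz
  · have : (0 : ℝ) ≤ z ⟨0, hd⟩ := by exact_mod_cast hz
    exact le_trans (by linarith) (neg_le_abs _)
  · have : (z ⟨0, hd⟩ : ℝ) ≤ -1 := by exact_mod_cast (by omega : z ⟨0, hd⟩ ≤ -1)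
    exact le_trans (by linarith) (le_abs_self _)

lemma torusDist_le {x y : EuclideanSpace ℝ (Fin d)} {a b : ℝ} (ha : 0 ≤ a) (hb : 0 ≤ b)
    (h : ∀ i, y i ∈ Set.Icc (x i + a) (x i + b)) : torusDist x y ≤ √d * b := by
  refine (ciInf_le (bddBelow_torusDist x y) 0).trans ?_
  rw [EuclideanSpace.norm_eq]
  calc √(∑ i, ‖(x - y - (WithLp.equiv 2 (Fin d → ℝ)).symm
        (fun i => (((0 : Fin d → ℤ) i : ℤ) : ℝ))) i‖ ^ 2)
      ≤ √(∑ _i : Fin d, b ^ 2) := by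
        refine Real.sqrt_le_sqrt (Finset.sum_le_sum fun i _ => ?_)
        have := h i
        simp only [PiLp.sub_apply, WithLp.equiv_symm_apply, Real.norm_eq_abs, sq_abs,
          Pi.zero_apply, Int.cast_zero, sub_zero]
        nlinarith [this.1, this.2]
    _ = √d * b := by
        simp [Real.sqrt_sq hb]

lemma map_pair (M : Model d P) [IsProbabilityMeasure P] {i j : ℕ} (hi : 1 ≤ i) (hj : 1 ≤ j)
    (hij : i ≠ j) :
    Measure.map (fun ω => (M.X i ω, M.X j ω)) P
      = (volume.restrict (cube d)).prod (volume.restrict (cube d)) := by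
  have h : IndepFun (M.X i) (M.X j) P :=
    M.X_indep.indepFun (i := ⟨i, hi⟩) (j := ⟨j, hj⟩) (by simpa using hij)
  rw [(indepFun_iff_map_prod_eq_prod_map_map (M.X_meas i).aemeasurable
    (M.X_meas j).aemeasurable).1 h, M.X_unif i hi, M.X_unif j hj]

lemma isProbabilityMeasure_restrict_cube (M : Model d P) [IsProbabilityMeasure P] :
    IsProbabilityMeasure (volume.restrict (cube d)) := by
  rw [← M.X_unif 1 le_rfl]
  exact Measure.isProbabilityMeasure_map (M.X_meas 1).aemeasurable

lemma measure_torusDist_lt (M : Model d P) [IsProbabilityMeasure P] {i j : ℕ} (hi : 1 ≤ i)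
    (hj : 1 ≤ j)
    (hij : i ≠ j) {t : ℝ} (ht : 0 < t) :
    P {ω | torusDist (M.X i ω) (M.X j ω) < t}
      ≤ ENNReal.ofReal (t ^ d) * volume (Metric.ball (0 : EuclideanSpace ℝ (Fin d)) 1) := by
  have := isProbabilityMeasure_restrict_cube M
  have hs : MeasurableSet {p : EuclideanSpace ℝ (Fin d) × EuclideanSpace ℝ (Fin d) |
      torusDist p.1 p.2 < t} := measurableSet_lt measurable_torusDist measurable_const
  have h1 : P {ω | torusDist (M.X i ω) (M.X j ω) < t}
      = Measure.map (fun ω => (M.X i ω, M.X j ω)) P {p | torusDist p.1 p.2 < t} := by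
    rw [Measure.map_apply ((M.X_meas i).prodMk (M.X_meas j)) hs]
    rfl
  rw [h1, map_pair M hi hj hij, Measure.prod_apply hs]
  calc _ ≤ ∫⁻ _x, ENNReal.ofReal (t ^ d) * volume (Metric.ball (0 : EuclideanSpace ℝ (Fin d)) 1)
        ∂(volume.restrict (cube d)) := by
        refine lintegral_mono fun x => ?_
        refine (volume_restrict_cube_torusDist_lt x t).trans ?_
        rw [Measure.addHaar_ball_of_pos _ _ ht, finrank_euclideanSpace_fin]
    _ = _ := by simp

/-- The set of pairs of points whose coordinate differences lie in `[b/2, b]`. -/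
def shell (d : ℕ) (b : ℝ) : Set (EuclideanSpace ℝ (Fin d) × EuclideanSpace ℝ (Fin d)) :=
  {p | ∀ i, p.2 i ∈ Set.Icc (p.1 i + b / 2) (p.1 i + b)}

lemma measurableSet_shell (b : ℝ) : MeasurableSet (shell d b) := by
  unfold shell
  simp only [Set.mem_Icc, ofPred_forall, ofPred_and]
  exact MeasurableSet.iInter fun i => (measurableSet_le (by fun_prop) (by fun_prop)).inter
    (measurableSet_le (by fun_prop) (by fun_prop))

lemma le_measure_shell (M : Model d P) [IsProbabilityMeasure P] {i j : ℕ} (hi : 1 ≤ i) (hj : 1 ≤ j)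
    (hij : i ≠ j) {b : ℝ} (hb : 0 < b) (hb' : b ≤ 1 / 4) :
    ENNReal.ofReal ((b / 4) ^ d) ≤ P {ω | (M.X i ω, M.X j ω) ∈ shell d b} := by
  have hs := measurableSet_shell (d := d) b
  have h1 : P {ω | (M.X i ω, M.X j ω) ∈ shell d b}
      = Measure.map (fun ω => (M.X i ω, M.X j ω)) P (shell d b) := by
    rw [Measure.map_apply ((M.X_meas i).prodMk (M.X_meas j)) hs]
    rfl
  set C : Set (EuclideanSpace ℝ (Fin d)) :=
    {x | ∀ i, x i ∈ Set.Icc ((fun _ => -(1 / 4) : Fin d → ℝ) i) ((fun _ => 1 / 4) i)} with hC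
  have hCm : MeasurableSet C := measurableSet_box _ _
  have hCc : C ⊆ cube d := by
    intro x hx i
    have := hx i
    simp only [Set.mem_Icc] at this
    exact ⟨by linarith [this.1], by linarith [this.2]⟩
  rw [h1, map_pair M hi hj hij, Measure.prod_apply hs]
  have hx : ∀ x ∈ C, ENNReal.ofReal ((b / 2) ^ d)
      ≤ volume.restrict (cube d) (Prod.mk x ⁻¹' shell d b) := by
    intro x hx
    rw [Measure.restrict_apply (hs.preimage (by fun_prop))]
    have hbox : {y : EuclideanSpace ℝ (Fin d) | ∀ i, y i ∈ Set.Icc ((fun i => x i + b / 2) i)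
        ((fun i => x i + b) i)} ⊆ Prod.mk x ⁻¹' shell d b ∩ cube d := by
      intro y hy
      refine ⟨hy, fun i => ?_⟩
      have h1 := hy i
      have h2 := hx i
      simp only [Set.mem_Icc] at h1 h2
      exact ⟨by linarith [h1.1, h2.1], by linarith [h1.2, h2.2]⟩
    refine le_trans (le_of_eq ?_) (measure_mono hbox)
    have hlen : ∀ i, x i + b - (x i + b / 2) = b / 2 := fun i => by ring
    rw [volume_box]
    simp only [hlen, Finset.prod_const, Finset.card_univ, Fintype.card_fin]
    rw [ENNReal.ofReal_pow (by linarith)]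
  calc ENNReal.ofReal ((b / 4) ^ d)
      = ENNReal.ofReal ((b / 2) ^ d) * volume C := by
        rw [hC, volume_box]
        simp only [Finset.prod_const, Finset.card_univ, Fintype.card_fin]
        rw [← ENNReal.ofReal_pow (by norm_num), ← ENNReal.ofReal_mul (by positivity), ← mul_pow]
        ring_nf
    _ = ∫⁻ _x in C, ENNReal.ofReal ((b / 2) ^ d) := by simp
    _ ≤ ∫⁻ x in C, volume.restrict (cube d) (Prod.mk x ⁻¹' shell d b) :=
        setLIntegral_mono' hCm hx
    _ ≤ ∫⁻ x in cube d, volume.restrict (cube d) (Prod.mk x ⁻¹' shell d b) :=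
        lintegral_mono_set hCc

lemma iIndepSet_of_measurableSet_iSup {ι κ : Type*} [IsProbabilityMeasure P]
    {m : ι → MeasurableSpace Ω}
    (hle : ∀ i, m i ≤ ‹MeasurableSpace Ω›) (hm : iIndep m P) {S : κ → Set ι}
    (hS : Pairwise (Function.onFun Disjoint S)) {A : κ → Set Ω}
    (hA : ∀ k, MeasurableSet[⨆ i ∈ S k, m i] (A k)) : iIndepSet A P := by
  classical
  rw [iIndepSet_iff_meas_biInter fun k => iSup₂_le (fun i _ => hle i) _ (hA k)]
  intro s
  induction s using Finset.induction_on with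
  | empty => simp
  | insert a t hat ih =>
    rw [Finset.set_biInter_insert, Finset.prod_insert hat, ← ih]
    have hdisj : Disjoint (S a) (⋃ k ∈ t, S k) := by
      rw [Set.disjoint_iUnion₂_right]
      exact fun k hk => hS (by rintro rfl; exact hat hk)
    refine (Indep_iff _ _ _).1 (indep_iSup_of_disjoint hle hm hdisj) _ _ (hA a) ?_
    refine Finset.measurableSet_biInter t fun k hk => ?_
    exact (iSup₂_mono' fun i hi => ⟨i, mem_biUnion hk hi, le_rfl⟩ :
      (⨆ i ∈ S k, m i) ≤ ⨆ i ∈ ⋃ k ∈ t, S k, m i) _ (hA k)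

lemma measure_biInter_compl_of_iIndepSet [IsProbabilityMeasure P] {κ : Type*} {A : κ → Set Ω}
    (hm : ∀ k, MeasurableSet (A k)) (h : iIndepSet A P) (s : Finset κ) :
    P (⋂ k ∈ s, (A k)ᶜ) = ∏ k ∈ s, (1 - P (A k)) := by
  rw [((iIndepSet_iff_iIndep _ _).1 h).meas_biInter (S := s) (s := fun k => (A k)ᶜ)
    fun k _ => (MeasurableSpace.measurableSet_generateFrom (mem_singleton (A k))).compl]
  exact Finset.prod_congr rfl fun k _ => prob_compl_eq_one_sub (hm k)

/-- Events depending on the points are independent of events depending on the edge marks. -/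
lemma measure_inter_X_U (M : Model d P) {A B : Set Ω}
    (hA : MeasurableSet[MeasurableSpace.comap (fun ω => fun i : ℕ => M.X i ω) inferInstance] A)
    (hB : MeasurableSet[MeasurableSpace.comap
      (fun ω => fun p : ℕ × ℕ => M.U p.1 p.2 ω) inferInstance] B) :
    P (A ∩ B) = P A * P B := by
  have h := M.families_indep.indep (i := 0) (j := 2) (by decide)
  exact (Indep_iff _ _ _).1 h A B hA hB

lemma measurableSet_comap_X (M : Model d P) (i j : ℕ)
    {s : Set (EuclideanSpace ℝ (Fin d) × EuclideanSpace ℝ (Fin d))} (hs : MeasurableSet s) :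
    MeasurableSet[MeasurableSpace.comap (fun ω => fun i : ℕ => M.X i ω) inferInstance]
      {ω | (M.X i ω, M.X j ω) ∈ s} :=
  ⟨{x | (x i, x j) ∈ s}, hs.preimage (by fun_prop), rfl⟩

lemma measurableSet_comap_U (M : Model d P) (i j : ℕ) {s : Set ℝ} (hs : MeasurableSet s) :
    MeasurableSet[MeasurableSpace.comap (fun ω => fun p : ℕ × ℕ => M.U p.1 p.2 ω) inferInstance]
      {ω | M.U i j ω ∈ s} :=
  ⟨{u | u (i, j) ∈ s}, hs.preimage (measurable_pi_apply (i, j)), rfl⟩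

lemma measure_U_le (M : Model d P) {i j : ℕ} (hi : 1 ≤ i) (hij : i < j) (t : ℝ) :
    P {ω | M.U i j ω ≤ t} ≤ ENNReal.ofReal t := by
  have h : P {ω | M.U i j ω ≤ t} = Measure.map (M.U i j) P (Iic t) := by
    rw [Measure.map_apply (M.U_meas i j) measurableSet_Iic]; rfl
  rw [h, M.U_unif i j hi hij, Measure.restrict_apply measurableSet_Iic]
  have hsub : Iic t ∩ Icc 0 1 ⊆ Icc 0 t := fun x hx => ⟨hx.2.1, hx.1⟩
  exact (measure_mono hsub).trans (by simp)

lemma le_measure_U_le (M : Model d P) {i j : ℕ} (hi : 1 ≤ i) (hij : i < j) {t : ℝ} (ht : t ≤ 1) :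
    ENNReal.ofReal t ≤ P {ω | M.U i j ω ≤ t} := by
  have h : P {ω | M.U i j ω ≤ t} = Measure.map (M.U i j) P (Iic t) := by
    rw [Measure.map_apply (M.U_meas i j) measurableSet_Iic]; rfl
  rw [h, M.U_unif i j hi hij, Measure.restrict_apply measurableSet_Iic]
  have hsub : Icc 0 t ⊆ Iic t ∩ Icc 0 1 := fun x hx => ⟨hx.2, hx.1, hx.2.trans ht⟩
  exact le_trans (by simp) (measure_mono hsub)

/-- The event that the points `2k+1`, `2k+2` lie in the shell of size `b` and their mark is at
most `p`. -/
def pairEvent (M : Model d P) (b p : ℝ) (k : ℕ) : Set Ω :=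
  {ω | (M.X (2 * k + 1) ω, M.X (2 * k + 2) ω) ∈ shell d b} ∩
    {ω | M.U (2 * k + 1) (2 * k + 2) ω ≤ p}

lemma iIndepSet_pairEvent [IsProbabilityMeasure P] (M : Model d P) (b p : ℝ) :
    iIndepSet (pairEvent M b p) P := by
  have hXm : ∀ k, MeasurableSet[MeasurableSpace.comap (fun ω => fun i : ℕ => M.X i ω)
      inferInstance] {ω | (M.X (2 * k + 1) ω, M.X (2 * k + 2) ω) ∈ shell d b} := fun k =>
    measurableSet_comap_X M _ _ (measurableSet_shell b)
  have hUm : ∀ k, MeasurableSet[MeasurableSpace.comap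
      (fun ω => fun p : ℕ × ℕ => M.U p.1 p.2 ω) inferInstance]
      {ω | M.U (2 * k + 1) (2 * k + 2) ω ≤ p} := fun k =>
    measurableSet_comap_U M _ _ measurableSet_Iic
  have hXle : MeasurableSpace.comap (fun ω => fun i : ℕ => M.X i ω) inferInstance
      ≤ ‹MeasurableSpace Ω› := (measurable_pi_lambda _ M.X_meas).comap_le
  have hUle : MeasurableSpace.comap (fun ω => fun p : ℕ × ℕ => M.U p.1 p.2 ω) inferInstance
      ≤ ‹MeasurableSpace Ω› := (measurable_pi_lambda _ fun p : ℕ × ℕ => M.U_meas p.1 p.2).comap_le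
  have hX : iIndepSet (fun k => {ω | (M.X (2 * k + 1) ω, M.X (2 * k + 2) ω) ∈ shell d b}) P := by
    refine iIndepSet_of_measurableSet_iSup
      (m := fun i : {i : ℕ // 1 ≤ i} => MeasurableSpace.comap (M.X i) inferInstance)
      (fun i => (M.X_meas i).comap_le) M.X_indep
      (S := fun k => {i | (i : ℕ) = 2 * k + 1 ∨ (i : ℕ) = 2 * k + 2}) ?_ ?_
    · intro k l hkl
      refine Set.disjoint_left.2 fun i hi hi' => ?_
      simp only [Set.mem_ofPred_eq] at hi hi'
      omega
    · intro k
      have h : ∀ j (hj : 1 ≤ j), (j = 2 * k + 1 ∨ j = 2 * k + 2) →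
          Measurable[⨆ i ∈ {i : {i : ℕ // 1 ≤ i} | (i : ℕ) = 2 * k + 1 ∨ (i : ℕ) = 2 * k + 2},
            MeasurableSpace.comap (M.X i) inferInstance] (M.X j) := fun j hj hjk =>
        (comap_measurable (M.X j)).mono
          (le_iSup₂_of_le (⟨j, hj⟩ : {i : ℕ // 1 ≤ i}) hjk le_rfl) le_rfl
      exact ((h (2 * k + 1) (by omega) (Or.inl rfl)).prodMk
        (h (2 * k + 2) (by omega) (Or.inr rfl))) (measurableSet_shell b)
  have hU : iIndepSet (fun k => {ω | M.U (2 * k + 1) (2 * k + 2) ω ≤ p}) P := by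
    have h := M.U_indep.precomp (g := fun k : ℕ =>
      (⟨(2 * k + 1, 2 * k + 2), by simp⟩ : {p : ℕ × ℕ // 1 ≤ p.1 ∧ p.1 < p.2}))
      (fun k l hkl => by simpa using hkl)
    refine (iIndepSet_iff_meas_biInter fun k => hUle _ (hUm k)).2 fun s => ?_
    exact h.meas_biInter fun k _ => ⟨Iic p, measurableSet_Iic, rfl⟩
  refine (iIndepSet_iff_meas_biInter fun k => (hXle _ (hXm k)).inter (hUle _ (hUm k))).2 fun s => ?_
  rw [Finset.prod_congr rfl fun k _ => measure_inter_X_U M (hXm k) (hUm k), Finset.prod_mul_distrib,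
    ← hX.meas_biInter, ← hU.meas_biInter, ← measure_inter_X_U M
      (Finset.measurableSet_biInter s fun k _ => hXm k)
      (Finset.measurableSet_biInter s fun k _ => hUm k)]
  simp only [Set.iInter_inter_distrib]

lemma measurableSet_pairEvent (M : Model d P) (b p : ℝ) (k : ℕ) :
    MeasurableSet (pairEvent M b p k) :=
  (((M.X_meas _).prodMk (M.X_meas _)) (measurableSet_shell b)).inter
    (measurableSet_le (M.U_meas _ _) measurable_const)

lemma measure_biInter_compl_pairEvent_le [IsProbabilityMeasure P] (M : Model d P) {b p : ℝ}
    (hb : 0 < b) (hb' : b ≤ 1 / 4) (hp : 0 ≤ p) (hp' : p ≤ 1) (K : ℕ) :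
    P (⋂ k ∈ Finset.range K, (pairEvent M b p k)ᶜ)
      ≤ ENNReal.ofReal (Real.exp (-(K * ((b / 4) ^ d * p)))) := by
  rw [measure_biInter_compl_of_iIndepSet (measurableSet_pairEvent M b p) (iIndepSet_pairEvent M b p)]
  have hle : ∀ k ∈ Finset.range K, 1 - P (pairEvent M b p k)
      ≤ ENNReal.ofReal (Real.exp (-((b / 4) ^ d * p))) := by
    intro k _
    have h1 : ENNReal.ofReal ((b / 4) ^ d * p) ≤ P (pairEvent M b p k) := by
      have h2 : P (pairEvent M b p k) = _ :=
        measure_inter_X_U M (measurableSet_comap_X M _ _ (measurableSet_shell b))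
          (measurableSet_comap_U M _ _ measurableSet_Iic)
      rw [h2, ENNReal.ofReal_mul (by positivity)]
      exact mul_le_mul' (le_measure_shell M (by omega) (by omega) (by omega) hb hb')
        (le_measure_U_le M (by omega) (by omega) hp')
    refine (tsub_le_tsub_left h1 1).trans ?_
    rw [← ENNReal.ofReal_one, ← ENNReal.ofReal_sub _ (by positivity)]
    exact ENNReal.ofReal_le_ofReal (Real.one_sub_le_exp_neg _)
  refine (Finset.prod_le_prod' hle).trans_eq ?_
  rw [Finset.prod_const, Finset.card_range, ← ENNReal.ofReal_pow (by positivity), ← Real.exp_nat_mul]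
  ring_nf

lemma ae_eventually_notMem_of_le_ofReal {s : ℕ → Set Ω} {f : ℕ → ℝ} (hf : Summable f)
    (h : ∀ᶠ k in atTop, P (s k) ≤ ENNReal.ofReal (f k)) : ∀ᵐ ω ∂P, ∀ᶠ k in atTop, ω ∉ s k := by
  obtain ⟨K, hK⟩ := eventually_atTop.1 h
  have hsum : ∑' k, P (s (k + K)) ≠ ⊤ := by
    refine ne_top_of_le_ne_top ?_ (ENNReal.tsum_le_tsum fun k => hK (k + K) (by omega))
    exact ((summable_nat_add_iff K).2 hf).tsum_ofReal_ne_top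
  filter_upwards [ae_eventually_notMem hsum] with ω hω
  exact ((eventually_map (P := fun k => ω ∉ s k)).2 hω).filter_mono (map_add_atTop_eq_nat K).ge

lemma lintegral_pow_N (M : Model d P) (n : ℕ) {t : ℝ} (ht : 0 ≤ t) :
    ∫⁻ ω, ENNReal.ofReal (t ^ M.N n ω) ∂P = ENNReal.ofReal (Real.exp (n * (t - 1))) := by
  have h1 : ∫⁻ ω, ENNReal.ofReal (t ^ M.N n ω) ∂P
      = ∫⁻ k, ENNReal.ofReal (t ^ k) ∂(Measure.map (M.N n) P) :=
    (lintegral_map (f := fun k : ℕ => ENNReal.ofReal (t ^ k)) (by fun_prop) (M.N_meas n)).symm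
  have h2 : ∀ k : ℕ, ENNReal.ofReal (t ^ k) * Measure.map (M.N n) P {k}
      = ENNReal.ofReal (Real.exp (-n) * ((n * t) ^ k / k.factorial)) := by
    intro k
    rw [Measure.map_apply (M.N_meas n) (measurableSet_singleton k)]
    have : M.N n ⁻¹' {k} = {ω | M.N n ω = k} := rfl
    rw [this, M.N_poisson, ← ENNReal.ofReal_mul (by positivity)]
    congr 1
    rw [mul_pow]
    ring
  have h3 : HasSum (fun k : ℕ => Real.exp (-n) * ((n * t) ^ k / k.factorial))
      (Real.exp (n * (t - 1))) := by
    have := (NormedSpace.expSeries_div_hasSum_exp ((n : ℝ) * t)).mul_left (Real.exp (-n))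
    rw [← Real.exp_eq_exp_ℝ, ← Real.exp_add] at this
    rwa [show -(n : ℝ) + n * t = n * (t - 1) by ring] at this
  rw [h1, lintegral_countable']
  simp_rw [h2]
  rw [← ENNReal.ofReal_tsum_of_nonneg (fun k => by positivity) h3.summable, h3.tsum_eq]

/-- A Chernoff bound for the Poisson counts. -/
lemma measure_N_le_of_pow_le (M : Model d P) (n : ℕ) {t a : ℝ} (ht : 0 ≤ t) (ha : 0 < a)
    {s : Set Ω} (hs : ∀ ω ∈ s, a ^ n ≤ t ^ M.N n ω) :
    P s ≤ ENNReal.ofReal ((Real.exp (t - 1) / a) ^ n) := by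
  have h := mul_meas_ge_le_lintegral (μ := P)
    (f := fun ω => ENNReal.ofReal (t ^ M.N n ω)) (by have := M.N_meas n; fun_prop)
    (ENNReal.ofReal (a ^ n))
  rw [lintegral_pow_N M n ht] at h
  have hs' : P s ≤ P {ω | ENNReal.ofReal (a ^ n) ≤ ENNReal.ofReal (t ^ M.N n ω)} :=
    measure_mono fun ω hω => ENNReal.ofReal_le_ofReal (hs ω hω)
  rw [div_pow, ← Real.exp_nat_mul, ENNReal.ofReal_div_of_pos (by positivity),
    ENNReal.le_div_iff_mul_le (Or.inl (by simpa using by positivity)) (Or.inl (by simp)), mul_comm]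
  exact (mul_le_mul_right hs' _).trans h

lemma ae_eventually_N_le (M : Model d P) :
    ∀ᵐ ω ∂P, ∀ᶠ n in atTop, M.N n ω ≤ 4 * n := by
  have he := Real.exp_one_lt_d9
  have hsum : Summable fun n : ℕ => (Real.exp (2 - 1) / 16) ^ n :=
    summable_geometric_of_lt_one (by positivity) (by norm_num; linarith)
  have hP : ∀ n, P {ω | 4 * n < M.N n ω} ≤ ENNReal.ofReal ((Real.exp (2 - 1) / 16) ^ n) := by
    refine fun n => measure_N_le_of_pow_le M n (by norm_num) (by norm_num) fun ω hω => ?_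
    have hω' : 4 * n < M.N n ω := hω
    rw [show (16 : ℝ) = 2 ^ 4 by norm_num, ← pow_mul]
    exact pow_le_pow_right₀ (by norm_num) hω'.le
  filter_upwards [ae_eventually_notMem_of_le_ofReal hsum (Eventually.of_forall hP)] with ω hω
  filter_upwards [hω] with n hn
  simpa using hn

lemma ae_eventually_le_N (M : Model d P) :
    ∀ᵐ ω ∂P, ∀ᶠ n in atTop, n ≤ 4 * M.N n ω := by
  have hlog : Real.log 2 < 15 / 16 := Real.log_two_lt_d9.trans (by norm_num)
  have hexp : 2 < Real.exp (15 / 16) := (Real.log_lt_iff_lt_exp (by norm_num)).1 hlog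
  have hsum : Summable fun n : ℕ => (Real.exp (1 / 16 - 1) / (1 / 2)) ^ n := by
    refine summable_geometric_of_lt_one (by positivity) ?_
    rw [show (1 / 16 - 1 : ℝ) = -(15 / 16) by norm_num, Real.exp_neg, div_lt_one (by norm_num),
      one_div]
    exact inv_strictAnti₀ (by norm_num) hexp
  have hP : ∀ n, P {ω | 4 * M.N n ω < n}
      ≤ ENNReal.ofReal ((Real.exp (1 / 16 - 1) / (1 / 2)) ^ n) := by
    refine fun n => measure_N_le_of_pow_le M n (by norm_num) (by norm_num) fun ω hω => ?_
    have hω' : 4 * M.N n ω < n := hω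
    rw [show (1 / 16 : ℝ) = (1 / 2) ^ 4 by norm_num, ← pow_mul]
    exact pow_le_pow_of_le_one (by norm_num) (by norm_num) hω'.le
  filter_upwards [ae_eventually_notMem_of_le_ofReal hsum (Eventually.of_forall hP)] with ω hω
  filter_upwards [hω] with n hn
  simpa using hn

lemma exists_g_le_mul_rpow (M : Model d P) {c : ℝ} (hc : 0 ≤ c)
    (hg : M.g =o[atTop] fun r : ℝ => r ^ (-c)) :
    ∃ K : ℝ, 0 < K ∧ ∀ s, 0 < s → M.g s ≤ K * s ^ (-c) := by
  obtain ⟨s₀, hs₀⟩ := eventually_atTop.1 (hg.bound one_pos)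
  have hs₁ : 1 ≤ max s₀ 1 := le_max_right _ _
  have hK : 1 ≤ (max s₀ 1) ^ c := Real.one_le_rpow hs₁ hc
  refine ⟨(max s₀ 1) ^ c, by positivity, fun s hs => ?_⟩
  rcases le_or_gt (max s₀ 1) s with h | h
  · have h1 := hs₀ s ((le_max_left _ _).trans h)
    rw [one_mul, Real.norm_of_nonneg (by positivity : 0 ≤ s ^ (-c))] at h1
    exact ((le_abs_self _).trans h1).trans (le_mul_of_one_le_left (by positivity) hK)
  · refine (M.g_mem s hs.le).2.trans ?_
    rw [Real.rpow_neg hs.le, ← div_eq_mul_inv, one_le_div (by positivity)]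
    exact Real.rpow_le_rpow hs.le h.le hc

/-- The probability that a fixed edge of `G(r)` is present and longer than `ℓ` is
`O(ℓ^{d-c} r^c)`. -/
lemma exists_measure_longEdge_le [IsProbabilityMeasure P] (M : Model d P) {c : ℝ} (hc : d < c)
    (hg : M.g =o[atTop] fun r : ℝ => r ^ (-c)) :
    ∃ C : ℝ, 0 < C ∧ ∀ i j : ℕ, 1 ≤ i → 1 ≤ j → i ≠ j → ∀ ℓ r : ℝ, 0 < ℓ → 0 < r →
      P {ω | ℓ ≤ torusDist (M.X i ω) (M.X j ω) ∧ M.U (min i j) (max i j) ω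
        ≤ M.g (torusDist (M.X i ω) (M.X j ω) / r)} ≤ ENNReal.ofReal (C * (ℓ ^ (d - c) * r ^ c)) := by
  have hc0 : 0 ≤ c := (Nat.cast_nonneg d).trans hc.le
  obtain ⟨K, hK, hgK⟩ := exists_g_le_mul_rpow M hc0 hg
  set v := (volume (Metric.ball (0 : EuclideanSpace ℝ (Fin d)) 1)).toReal with hv
  have hv' : volume (Metric.ball (0 : EuclideanSpace ℝ (Fin d)) 1) = ENNReal.ofReal v :=
    (ENNReal.ofReal_toReal measure_ball_lt_top.ne).symm
  have hv0 : 0 < v := ENNReal.toReal_pos (Metric.measure_ball_pos _ _ one_pos).ne'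
    measure_ball_lt_top.ne
  set q : ℝ := 2 ^ (d - c) with hq
  have hq0 : 0 < q := by positivity
  have hq1 : q < 1 := Real.rpow_lt_one_of_one_lt_of_neg (by norm_num) (by linarith)
  refine ⟨v * K * 2 ^ d * (1 - q)⁻¹, by have := sub_pos.2 hq1; positivity, ?_⟩
  intro i j hi hj hij ℓ r hℓ hr
  have hsub : {ω | ℓ ≤ torusDist (M.X i ω) (M.X j ω) ∧ M.U (min i j) (max i j) ω
        ≤ M.g (torusDist (M.X i ω) (M.X j ω) / r)}
      ⊆ ⋃ m : ℕ, {ω | torusDist (M.X i ω) (M.X j ω) < 2 ^ (m + 1) * ℓ} ∩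
        {ω | M.U (min i j) (max i j) ω ≤ K * (2 ^ m * ℓ / r) ^ (-c)} := by
    rintro ω ⟨hω, hU⟩
    obtain ⟨m, hm, hm'⟩ := exists_nat_pow_near ((one_le_div hℓ).2 hω) (one_lt_two (α := ℝ))
    rw [le_div_iff₀ hℓ] at hm
    rw [div_lt_iff₀ hℓ] at hm'
    refine mem_iUnion.2 ⟨m, hm', hU.trans ?_⟩
    refine (hgK _ (div_pos (hℓ.trans_le hω) hr)).trans ?_
    refine mul_le_mul_of_nonneg_left ?_ hK.le
    exact Real.rpow_le_rpow_of_nonpos (by positivity) (by gcongr) (by linarith)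
  have hterm : ∀ m : ℕ, P ({ω | torusDist (M.X i ω) (M.X j ω) < 2 ^ (m + 1) * ℓ} ∩
        {ω | M.U (min i j) (max i j) ω ≤ K * (2 ^ m * ℓ / r) ^ (-c)})
      ≤ ENNReal.ofReal (v * K * 2 ^ d * (ℓ ^ (d - c) * r ^ c) * q ^ m) := by
    intro m
    have h := measure_inter_X_U M
      (measurableSet_comap_X M i j (measurableSet_lt measurable_torusDist
        (measurable_const (a := 2 ^ (m + 1) * ℓ))))
      (measurableSet_comap_U M (min i j) (max i j)
        (measurableSet_Iic (a := K * (2 ^ m * ℓ / r) ^ (-c))))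
    refine h.trans_le ?_
    refine (mul_le_mul' (measure_torusDist_lt M hi hj hij (by positivity))
      (measure_U_le M (le_min hi hj) (min_lt_max.2 hij) _)).trans_eq ?_
    rw [hv', ← ENNReal.ofReal_mul (by positivity), ← ENNReal.ofReal_mul (by positivity)]
    congr 1
    have e1 : (2 ^ m * ℓ / r) ^ (-c) = (2 ^ m : ℝ) ^ (-c) * ℓ ^ (-c) * r ^ c := by
      rw [Real.div_rpow (by positivity) hr.le, Real.mul_rpow (by positivity) hℓ.le,
        Real.rpow_neg hr.le, div_inv_eq_mul]
    have e2 : ℓ ^ (d - c) = ℓ ^ d * ℓ ^ (-c) := by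
      rw [sub_eq_add_neg, Real.rpow_add hℓ, Real.rpow_natCast]
    have e3 : q ^ m = (2 ^ m) ^ d * (2 ^ m : ℝ) ^ (-c) := by
      rw [hq, ← Real.rpow_natCast, ← Real.rpow_mul (by norm_num), mul_comm, Real.rpow_mul (by norm_num),
        Real.rpow_natCast, sub_eq_add_neg, Real.rpow_add (by positivity), Real.rpow_natCast]
    rw [e1, e2, e3]
    ring
  refine ((measure_mono hsub).trans (measure_iUnion_le _)).trans
    ((ENNReal.tsum_le_tsum hterm).trans_eq ?_)
  rw [← ENNReal.ofReal_tsum_of_nonneg (fun m => by positivity)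
    ((summable_geometric_of_lt_one hq0.le hq1).mul_left _), tsum_mul_left,
    tsum_geometric_of_lt_one hq0.le hq1]
  congr 1
  ring

/-- The event that among the first `m` points there is a potential edge of length at least `ℓ`. -/
def longEdgeEvent (M : Model d P) (m : ℕ) (ℓ r : ℝ) : Set Ω :=
  {ω | ∃ i ∈ Finset.Icc 1 m, ∃ j ∈ Finset.Icc 1 m, i ≠ j ∧ ℓ ≤ torusDist (M.X i ω) (M.X j ω) ∧
    M.U (min i j) (max i j) ω ≤ M.g (torusDist (M.X i ω) (M.X j ω) / r)}

lemma exists_measure_longEdgeEvent_le [IsProbabilityMeasure P] (M : Model d P) {c : ℝ}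
    (hc : d < c) (hg : M.g =o[atTop] fun r : ℝ => r ^ (-c)) :
    ∃ C : ℝ, 0 < C ∧ ∀ (m : ℕ) (ℓ r : ℝ), 0 < ℓ → 0 < r →
      P (longEdgeEvent M m ℓ r) ≤ ENNReal.ofReal (m ^ 2 * (C * (ℓ ^ (d - c) * r ^ c))) := by
  obtain ⟨C, hC, hP⟩ := exists_measure_longEdge_le M hc hg
  refine ⟨C, hC, fun m ℓ r hℓ hr => ?_⟩
  have hsub : longEdgeEvent M m ℓ r ⊆ ⋃ i ∈ Finset.Icc 1 m, ⋃ j ∈ Finset.Icc 1 m,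
      {ω | i ≠ j ∧ ℓ ≤ torusDist (M.X i ω) (M.X j ω) ∧
        M.U (min i j) (max i j) ω ≤ M.g (torusDist (M.X i ω) (M.X j ω) / r)} := by
    rintro ω ⟨i, hi, j, hj, h⟩
    exact mem_biUnion (Finset.mem_coe.2 hi) (mem_biUnion (Finset.mem_coe.2 hj) h)
  refine (measure_mono hsub).trans ((measure_biUnion_finset_le _ _).trans ?_)
  refine (Finset.sum_le_sum fun i hi => (measure_biUnion_finset_le _ _).trans
    (Finset.sum_le_sum (g := fun _ => ENNReal.ofReal (C * (ℓ ^ (d - c) * r ^ c)))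
      fun j hj => ?_)).trans_eq ?_
  · rw [Finset.mem_Icc] at hi hj
    by_cases hij : i = j
    · simp [hij]
    · simpa [hij] using hP i j hi.1 hj.1 hij ℓ r hℓ hr
  · simp only [Finset.sum_const, Nat.card_Icc, add_tsub_cancel_right, nsmul_eq_mul]
    rw [← mul_assoc, ENNReal.ofReal_mul (p := (m : ℝ) ^ 2) (by positivity),
      ← Nat.cast_pow, ENNReal.ofReal_natCast]
    push_cast
    ring

lemma rhat_pos (M : Model d P) {γ : ℝ} (hγ : 0 < γ) {n : ℕ} (hn : 2 ≤ n) : 0 < rhat M γ n := by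
  have hα := M.α_pos
  have hn' : (1 : ℝ) < n := by exact_mod_cast hn
  have := Real.log_pos hn'
  unfold rhat
  positivity

lemma rhat_anti (M : Model d P) {γ : ℝ} (hγ : 0 < γ) {m n : ℕ} (hm : 3 ≤ m) (hmn : m ≤ n) :
    rhat M γ n ≤ rhat M γ m := by
  have hα := M.α_pos
  have hm' : (3 : ℝ) ≤ m := by exact_mod_cast hm
  have hmn' : (m : ℝ) ≤ n := by exact_mod_cast hmn
  have he := Real.exp_one_lt_d9
  have hlog := Real.log_div_self_antitoneOn (a := (m : ℝ)) (b := n)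
    (by simp only [Set.mem_Ici]; linarith) (by simp only [Set.mem_Ici]; linarith) hmn'
  have hn0 := Real.log_nonneg (by linarith : (1 : ℝ) ≤ n)
  have e : ∀ x : ℝ, γ * Real.log x / (M.α * x) = γ / M.α * (Real.log x / x) := fun x => by
    rw [mul_div_mul_comm]
  unfold rhat
  rw [e, e]
  refine Real.rpow_le_rpow (by positivity) ?_ (by positivity)
  exact mul_le_mul_of_nonneg_left hlog (by positivity)

lemma rhat_pow (hd : d ≠ 0) (M : Model d P) {γ : ℝ} (hγ : 0 < γ) (n : ℕ) :
    rhat M γ n ^ d = γ * Real.log n / (M.α * n) := by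
  have hα := M.α_pos
  have := Real.log_natCast_nonneg n
  rw [rhat, one_div, Real.rpow_inv_natCast_pow (by positivity) hd]

lemma tendsto_rhat (hd : d ≠ 0) (M : Model d P) (γ : ℝ) :
    Tendsto (rhat M γ) atTop (nhds 0) := by
  have h1 : Tendsto (fun x : ℝ => Real.log x / x) atTop (nhds 0) :=
    Real.isLittleO_log_id_atTop.tendsto_div_nhds_zero
  have h2 := ((h1.comp tendsto_natCast_atTop_atTop).const_mul (γ / M.α)).rpow_const
    (p := (1 : ℝ) / d) (Or.inr (by positivity))
  rw [mul_zero, Real.zero_rpow (by positivity)] at h2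
  refine h2.congr fun n => ?_
  simp only [Function.comp, rhat]
  rw [mul_div_mul_comm]

lemma rhat_two_pow_rpow (M : Model d P) {γ : ℝ} (hγ : 0 < γ) (k : ℕ) (c : ℝ) :
    rhat M γ (2 ^ k) ^ c
      = (γ * Real.log 2 / M.α) ^ (c / d) * ((k : ℝ) ^ (c / d) * ((2 : ℝ) ^ (-(c / d))) ^ k) := by
  have hα := M.α_pos
  have hlog := Real.log_pos one_lt_two
  have e : γ * Real.log ((2 ^ k : ℕ) : ℝ) / (M.α * (2 ^ k : ℕ))
      = γ * Real.log 2 / M.α * (k * ((2 : ℝ) ^ k)⁻¹) := by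
    push_cast
    rw [Real.log_pow]
    field_simp
  rw [rhat, e, ← Real.rpow_mul (by positivity), one_div_mul_eq_div,
    Real.mul_rpow (by positivity) (by positivity), Real.mul_rpow (by positivity) (by positivity),
    Real.inv_rpow (by positivity), ← Real.rpow_neg (by positivity), ← Real.rpow_natCast,
    ← Real.rpow_natCast, ← Real.rpow_mul (by norm_num), ← Real.rpow_mul (by norm_num),
    mul_comm (k : ℝ) (-(c / d))]

lemma summable_rpow_mul_geometric {p q : ℝ} (hp : 0 < p) (hq : 0 < q) (hq1 : q < 1) :
    Summable fun k : ℕ => (k : ℝ) ^ p * q ^ k := by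
  refine Summable.of_nonneg_of_le (fun k => by positivity) (fun k => ?_)
    (summable_pow_mul_geometric_of_norm_lt_one ⌈p⌉₊ (r := q) (by rwa [Real.norm_of_nonneg hq.le]))
  refine mul_le_mul_of_nonneg_right ?_ (by positivity)
  rcases Nat.eq_zero_or_pos k with rfl | hk
  · rw [Nat.cast_zero, Real.zero_rpow hp.ne']
    positivity
  · rw [← Real.rpow_natCast]
    exact Real.rpow_le_rpow_of_exponent_le (by exact_mod_cast hk) (Nat.le_ceil p)

lemma tendsto_log_two : Tendsto (Nat.log 2) atTop atTop :=
  tendsto_atTop.2 fun K => (eventually_ge_atTop (2 ^ K)).mono fun _ hn =>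
    Nat.le_log_of_pow_le one_lt_two hn

lemma ae_eventually_longestEdge_le (hd : 0 < d) [IsProbabilityMeasure P] (M : Model d P)
    {c : ℝ} (hc : d < c) (hg : M.g =o[atTop] fun r : ℝ => r ^ (-c)) {γ : ℝ} (hγ : 0 < γ)
    {b : ℝ} (hb : 0 ≤ b) (hbc : b * (c - d) < c / d - 2) :
    ∀ᵐ ω ∂P, ∀ᶠ n : ℕ in atTop, longestEdge M n (rhat M γ n) ω ≤ (n : ℝ) ^ (-b) := by
  obtain ⟨C, hC, hP⟩ := exists_measure_longEdgeEvent_le M hc hg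
  have hα := M.α_pos
  have hd' : (0 : ℝ) < d := by exact_mod_cast hd
  have hlog := Real.log_pos one_lt_two
  set q : ℝ := 2 ^ (2 + b * (c - d) - c / d) with hq
  have hq1 : q < 1 := Real.rpow_lt_one_of_one_lt_of_neg (by norm_num) (by linarith)
  have hsum := (summable_rpow_mul_geometric (div_pos (hd'.trans hc) hd')
    (by positivity : 0 < q) hq1).mul_left
      (64 * C * 2 ^ (b * (c - d)) * (γ * Real.log 2 / M.α) ^ (c / d))
  have hev : ∀ᶠ k : ℕ in atTop,
      P (longEdgeEvent M (4 * 2 ^ (k + 1)) (((2 : ℝ) ^ (k + 1)) ^ (-b)) (rhat M γ (2 ^ k)))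
        ≤ ENNReal.ofReal (64 * C * 2 ^ (b * (c - d)) * (γ * Real.log 2 / M.α) ^ (c / d)
          * ((k : ℝ) ^ (c / d) * q ^ k)) := by
    filter_upwards [eventually_ge_atTop 1] with k hk
    refine (hP _ _ _ (by positivity) (rhat_pos M hγ ?_)).trans_eq ?_
    · exact (pow_le_pow_right₀ one_le_two hk : 2 ^ 1 ≤ 2 ^ k)
    · congr 1
      have e1 : (((2 : ℝ) ^ (k + 1)) ^ (-b)) ^ (d - c)
          = 2 ^ (b * (c - d)) * ((2 : ℝ) ^ (b * (c - d))) ^ k := by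
        rw [← Real.rpow_mul (by positivity), ← pow_succ', ← Real.rpow_natCast,
          ← Real.rpow_natCast, ← Real.rpow_mul (by norm_num), ← Real.rpow_mul (by norm_num)]
        congr 1
        ring
      have e2 : q ^ k = (4 : ℝ) ^ k * ((2 : ℝ) ^ (b * (c - d))) ^ k * ((2 : ℝ) ^ (-(c / d))) ^ k := by
        rw [hq, ← mul_pow, ← mul_pow, sub_eq_add_neg, Real.rpow_add (by norm_num),
          Real.rpow_add (by norm_num)]
        norm_num
      have e3 : (4 : ℝ) ^ k = (2 ^ k) ^ 2 := by
        rw [← pow_mul, mul_comm, pow_mul]; norm_num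
      rw [rhat_two_pow_rpow M hγ, e1, e2, e3]
      push_cast
      ring
  filter_upwards [ae_eventually_notMem_of_le_ofReal hsum hev, ae_eventually_N_le M] with ω hω hN
  have hN' : ∀ᶠ k : ℕ in atTop, M.N (2 ^ (k + 1)) ω ≤ 4 * 2 ^ (k + 1) :=
    ((tendsto_pow_atTop_atTop_of_one_lt one_lt_two).comp (tendsto_add_atTop_nat 1)).eventually hN
  filter_upwards [tendsto_log_two.eventually ((hω.and hN').and (eventually_ge_atTop 2)),
    eventually_ge_atTop 1] with n hn hn1
  obtain ⟨⟨hn₁, hn₂⟩, hn₃⟩ := hn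
  set k := Nat.log 2 n
  have hkn : 2 ^ k ≤ n := Nat.pow_log_le_self 2 (by omega)
  have hnk : n ≤ 2 ^ (k + 1) := (Nat.lt_pow_succ_log_self one_lt_two n).le
  have h4k : 2 ^ 2 ≤ 2 ^ k := pow_le_pow_right₀ one_le_two hn₃
  have hrn : 0 < rhat M γ n := rhat_pos M hγ (by omega)
  have hr : rhat M γ n ≤ rhat M γ (2 ^ k) := rhat_anti M hγ (by omega) hkn
  have hℓ : ((2 : ℝ) ^ (k + 1)) ^ (-b) ≤ (n : ℝ) ^ (-b) :=
    Real.rpow_le_rpow_of_nonpos (by exact_mod_cast hn1) (by exact_mod_cast hnk) (by linarith)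
  refine csSup_le ⟨0, Or.inl rfl⟩ ?_
  rintro t (rfl | ⟨i, j, ⟨hij, hi, hj, hiN, hjN, hU⟩, rfl⟩)
  · positivity
  · refine le_trans ?_ hℓ
    by_contra! hlt
    have hNk := (M.N_mono ω hnk).trans hn₂
    refine hn₁ ⟨i, Finset.mem_Icc.2 ⟨hi, hiN.trans hNk⟩, j, Finset.mem_Icc.2 ⟨hj, hjN.trans hNk⟩,
      hij, hlt.le, hU.trans ?_⟩
    have hD := torusDist_nonneg (M.X i ω) (M.X j ω)
    exact M.g_antitone (div_nonneg hD (hrn.trans_le hr).le) (div_nonneg hD hrn.le)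
      (div_le_div_of_nonneg_left hD hrn hr)

lemma exists_g_pos (hd : 0 < d) (M : Model d P) : ∃ s, 0 < s ∧ 0 < M.g s := by
  by_contra! h
  have : Nonempty (Fin d) := ⟨⟨0, hd⟩⟩
  have hae : (fun x : EuclideanSpace ℝ (Fin d) => M.g ‖x‖) =ᵐ[volume] 0 := by
    filter_upwards [compl_mem_ae_iff.2 (measure_singleton (0 : EuclideanSpace ℝ (Fin d)))] with x hx
    exact le_antisymm (h _ (norm_pos_iff.2 hx)) (M.g_mem _ (norm_nonneg x)).1
  have := M.α_pos
  rw [M.α_def, integral_congr_ae hae] at this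
  simp at this

lemma bddAbove_edgeLengths (M : Model d P) (n : ℕ) (r : ℝ) (ω : Ω) :
    BddAbove ({0} ∪ {t : ℝ | ∃ i j, adj M n r ω i j ∧ t = torusDist (M.X i ω) (M.X j ω)}) := by
  refine (Set.Finite.subset ((finite_singleton 0).union
    (((Finset.Icc 1 (M.N n ω) ×ˢ Finset.Icc 1 (M.N n ω)).image
      fun p => torusDist (M.X p.1 ω) (M.X p.2 ω)).finite_toSet)) ?_).bddAbove
  refine union_subset_union_right _ ?_
  rintro t ⟨i, j, ⟨-, hi, hj, hiN, hjN, -⟩, rfl⟩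
  simp only [Finset.coe_image, Set.mem_image, Finset.mem_coe, Finset.mem_product, Finset.mem_Icc]
  exact ⟨(i, j), ⟨⟨hi, hiN⟩, hj, hjN⟩, rfl⟩

/-- Almost surely the longest edge is eventually at least of order `1 / n`. -/
lemma exists_ae_eventually_le_longestEdge (hd : 0 < d) [IsProbabilityMeasure P] (M : Model d P)
    {γ : ℝ} (hγ : 0 < γ) :
    ∃ a : ℝ, 0 < a ∧
      ∀ᵐ ω ∂P, ∀ᶠ n : ℕ in atTop, a / n ≤ longestEdge M n (rhat M γ n) ω := by
  obtain ⟨s, hs, hp⟩ := exists_g_pos hd M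
  have hα := M.α_pos
  have hd' : (0 : ℝ) < d := by exact_mod_cast hd
  have hlog := Real.log_pos one_lt_two
  have hsd : 0 < √(d : ℝ) := Real.sqrt_pos.2 hd'
  set p := M.g s with hpdef
  set τ := s / √d with hτ
  have hτ0 : 0 < τ := by positivity
  set b : ℕ → ℝ := fun k => τ * rhat M γ (2 ^ (k + 1)) with hb
  have hpow : ∀ k : ℕ, rhat M γ (2 ^ (k + 1)) ^ d
      = γ * Real.log 2 / M.α * ((k + 1) * ((2 : ℝ) ^ (k + 1))⁻¹) := by
    intro k
    rw [rhat_pow hd.ne' M hγ]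
    push_cast
    rw [Real.log_pow]
    push_cast
    field_simp
  have hrlim : Tendsto (fun k : ℕ => rhat M γ (2 ^ (k + 1))) atTop (nhds 0) :=
    (tendsto_rhat hd.ne' M γ).comp
      ((tendsto_pow_atTop_atTop_of_one_lt one_lt_two).comp (tendsto_add_atTop_nat 1))
  have hblim : Tendsto b atTop (nhds 0) := by simpa using hrlim.const_mul τ
  set κ : ℝ := (τ / 4) ^ d * (γ * Real.log 2 / M.α) * p / 16 with hκ
  have hκ0 : 0 < κ := by positivity
  have hrpos : ∀ k : ℕ, 1 ≤ k → 0 < rhat M γ (2 ^ (k + 1)) := fun k hk =>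
    rhat_pos M hγ ((pow_le_pow_right₀ one_le_two (by omega) : 2 ^ 1 ≤ 2 ^ (k + 1)))
  have hsum : Summable fun k : ℕ => Real.exp (-κ) * Real.exp (-κ) ^ k :=
    (summable_geometric_of_lt_one (by positivity)
      (Real.exp_lt_one_iff.2 (by linarith))).mul_left _
  have hev : ∀ᶠ k : ℕ in atTop,
      P (⋂ l ∈ Finset.range (2 ^ (k - 3)), (pairEvent M (b k) p l)ᶜ)
        ≤ ENNReal.ofReal (Real.exp (-κ) * Real.exp (-κ) ^ k) := by
    filter_upwards [hblim.eventually_le_const (by norm_num : (0 : ℝ) < 1 / 4),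
      eventually_ge_atTop 3] with k hk hk3
    refine (measure_biInter_compl_pairEvent_le M (mul_pos hτ0 (hrpos k (by omega))) hk hp.le
      (M.g_mem s hs.le).2 _).trans_eq ?_
    rw [← Real.exp_nat_mul, ← Real.exp_add]
    congr 2
    have e1 : (b k / 4) ^ d = (τ / 4) ^ d * rhat M γ (2 ^ (k + 1)) ^ d := by
      rw [← mul_pow]; congr 1; simp only [hb]; ring
    obtain ⟨l, rfl⟩ : ∃ l, k = l + 3 := ⟨k - 3, by omega⟩
    rw [e1, hpow, hκ]
    simp only [Nat.add_sub_cancel]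
    push_cast
    field_simp
    ring
  refine ⟨τ / 4 * (γ * Real.log 2 / M.α), by positivity, ?_⟩
  filter_upwards [ae_eventually_notMem_of_le_ofReal hsum hev, ae_eventually_le_N M] with ω hω hN
  have hN' : ∀ᶠ k : ℕ in atTop, 2 ^ k ≤ 4 * M.N (2 ^ k) ω :=
    (tendsto_pow_atTop_atTop_of_one_lt one_lt_two).eventually hN
  filter_upwards [tendsto_log_two.eventually ((hω.and hN').and
    ((eventually_ge_atTop 3).and ((hblim.eventually_le_const (by norm_num : (0 : ℝ) < 1 / 4)).and
      (hrlim.eventually_le_const one_pos)))), eventually_ge_atTop 1] with n hn hn1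
  obtain ⟨⟨hn₁, hn₂⟩, hn₃, hn₄, hn₅⟩ := hn
  set k := Nat.log 2 n
  have hkn : 2 ^ k ≤ n := Nat.pow_log_le_self 2 (by omega)
  have hnk : n ≤ 2 ^ (k + 1) := (Nat.lt_pow_succ_log_self one_lt_two n).le
  have h8k : 2 ^ 3 ≤ 2 ^ k := pow_le_pow_right₀ one_le_two hn₃
  have hr0 := hrpos k (by omega)
  have hb0 : 0 < b k := mul_pos hτ0 hr0
  have hr : rhat M γ (2 ^ (k + 1)) ≤ rhat M γ n := rhat_anti M hγ (by omega) hnk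
  simp only [Set.mem_iInter, not_forall, Set.mem_compl_iff, not_not, Finset.mem_range] at hn₁
  obtain ⟨l, hl, hshell, hU⟩ := hn₁
  have hk3 : 2 ^ k = 8 * 2 ^ (k - 3) := by
    rw [show (8 : ℕ) = 2 ^ 3 by norm_num, ← pow_add]; congr 1; omega
  have hlN : 2 * l + 2 ≤ M.N n ω := by
    have := M.N_mono ω hkn
    simp only at this
    omega
  have hlow : b k / 2 ≤ torusDist (M.X (2 * l + 1) ω) (M.X (2 * l + 2) ω) :=
    le_torusDist hd (hn₄.trans (by norm_num)) hshell
  have hup := torusDist_le (by linarith) hb0.le hshell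
  have hedge : adj M n (rhat M γ n) ω (2 * l + 1) (2 * l + 2) := by
    refine ⟨by omega, by omega, by omega, by omega, hlN, ?_⟩
    rw [min_eq_left (by omega), max_eq_right (by omega)]
    refine le_trans hU ?_
    refine M.g_antitone (div_nonneg (torusDist_nonneg _ _) (hr0.le.trans hr)) hs.le ?_
    rw [div_le_iff₀ (hr0.trans_le hr)]
    refine hup.trans ?_
    simp only [hb, hτ]
    rw [← mul_assoc, mul_div_cancel₀ _ hsd.ne']
    exact mul_le_mul_of_nonneg_left hr hs.le
  refine le_trans ?_ (hlow.trans (le_csSup (bddAbove_edgeLengths M n _ ω)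
    (Or.inr ⟨_, _, hedge, rfl⟩)))
  have h1 : γ * Real.log 2 / M.α * ((2 : ℝ) ^ (k + 1))⁻¹ ≤ rhat M γ (2 ^ (k + 1)) := by
    refine le_trans ?_ (pow_le_of_le_one hr0.le hn₅ hd.ne')
    rw [hpow]
    refine mul_le_mul_of_nonneg_left ?_ (by positivity)
    exact le_mul_of_one_le_left (by positivity) (by linarith [(Nat.cast_nonneg k : (0 : ℝ) ≤ k)])
  have hkn' : (2 : ℝ) ^ (k + 1) ≤ 2 * n := by
    rw [pow_succ']
    exact mul_le_mul_of_nonneg_left (by exact_mod_cast hkn) (by norm_num)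
  have hn0 : (0 : ℝ) < n := by exact_mod_cast hn1
  calc τ / 4 * (γ * Real.log 2 / M.α) / n
      = τ / 2 * (γ * Real.log 2 / M.α * (2 * (n : ℝ))⁻¹) := by field_simp; norm_num
    _ ≤ τ / 2 * (γ * Real.log 2 / M.α * ((2 : ℝ) ^ (k + 1))⁻¹) := by gcongr
    _ ≤ τ / 2 * rhat M γ (2 ^ (k + 1)) := by gcongr
    _ = b k / 2 := by simp only [hb]; ring

/-- Proposition 3, (pe3a): a.s. `limsup log L_n(γ)/log n ≤ -(c-2d)/(d(c-d))`. -/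
theorem longestEdge_log_limsup_le (hd : 2 ≤ d) [IsProbabilityMeasure P] (M : Model d P)
    {c : ℝ} (hc : (2 : ℝ) * d < c)
    (hg : M.g =o[atTop] fun r : ℝ => r ^ (-c))
    {γ : ℝ} (hγ : 0 < γ) :
    ∀ᵐ ω ∂P, Filter.limsup
      (fun n : ℕ => Real.log (longestEdge M n (rhat M γ n) ω) / Real.log n)
        atTop ≤ -((c - 2 * d) / (d * (c - d))) := by
  have hd0 : 0 < d := by omega
  have hd' : (0 : ℝ) < d := by exact_mod_cast hd0
  have hcd : 0 < c - d := by linarith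
  set β := (c - 2 * d) / (d * (c - d)) with hβ
  have hβ0 : 0 < β := div_pos (by linarith) (by positivity)
  have hβc : β * (c - d) = c / d - 2 := by rw [hβ]; field_simp
  set θ : ℕ → ℝ := fun m => β * (1 - 1 / ((m : ℝ) + 1)) with hθ
  have hθ0 : ∀ m, 0 ≤ θ m := fun m => by
    have : 1 / ((m : ℝ) + 1) ≤ 1 := div_le_one_of_le₀ (by linarith [m.cast_nonneg (α := ℝ)])
      (by positivity)
    exact mul_nonneg hβ0.le (by linarith)
  have hθβ : ∀ m, θ m * (c - d) < c / d - 2 := fun m => by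
    rw [← hβc]
    refine mul_lt_mul_of_pos_right (mul_lt_of_lt_one_right hβ0 ?_) hcd
    have : 0 < 1 / ((m : ℝ) + 1) := by positivity
    linarith
  have hθlim : Tendsto (fun m => -θ m) atTop (nhds (-β)) := by
    simpa [hθ] using ((tendsto_one_div_add_atTop_nhds_zero_nat (𝕜 := ℝ)).const_sub 1).const_mul β |>.neg
  obtain ⟨a, ha, hlow⟩ := exists_ae_eventually_le_longestEdge hd0 M hγ
  have hup := ae_all_iff.2 fun m =>
    ae_eventually_longestEdge_le hd0 M (by linarith) hg hγ (hθ0 m) (hθβ m)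
  filter_upwards [hlow, hup] with ω hlow hup
  have hlogn : ∀ᶠ n : ℕ in atTop, max 1 (-Real.log a) ≤ Real.log n :=
    (Real.tendsto_log_atTop.comp tendsto_natCast_atTop_atTop).eventually_ge_atTop _
  have hcob : IsCoboundedUnder (· ≤ ·) atTop
      fun n : ℕ => Real.log (longestEdge M n (rhat M γ n) ω) / Real.log n := by
    refine IsBoundedUnder.isCoboundedUnder_le ⟨-2, eventually_map.2 ?_⟩
    filter_upwards [hlow, hlogn, eventually_ge_atTop 1] with n hn hln hn1
    have hn0 : (0 : ℝ) < n := by exact_mod_cast hn1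
    have h1 := Real.log_le_log (by positivity) hn
    rw [Real.log_div ha.ne' hn0.ne'] at h1
    have h2 := (le_max_left _ _).trans hln
    have h3 := (le_max_right _ _).trans hln
    rw [le_div_iff₀ (by linarith)]
    linarith
  refine ge_of_tendsto' hθlim fun m => limsup_le_of_le hcob ?_
  filter_upwards [hlow, hup m, hlogn, eventually_ge_atTop 1] with n hn hn' hln hn1
  have hn0 : (0 : ℝ) < n := by exact_mod_cast hn1
  have h1 := Real.log_le_log ((by positivity : 0 < a / n).trans_le hn) hn'
  rw [Real.log_rpow hn0] at h1
  rwa [div_le_iff₀ (by linarith [(le_max_left _ _).trans hln])]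

end RCM
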